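/- Suppose T is a subtree of ([ω]^ω, ⊆*) all of whose levels are countable, and b = {A_α : α < γ} is a maximal branch in T with cf(γ) > ω such that only countably many nodes of b are branching nodes of T. Then T is not a maximal subtree of ([ω]^ω, ⊆*). -/

import Mathlib

/-- `A ⊆* B`: almost inclusion, `A \ B` is finite. -/
def AlmostSubset (A B : Set ℕ) : Prop := (A \ B).Finite

/-- `A` and `B` are `⊆*`-incomparable. -/
def StarIncomp (A B : Set ℕ) : Prop := ¬ AlmostSubset A B ∧ ¬ AlmostSubset B A

/-- The predecessors of `t` in `T` with respect to `⊆*` (including `t` itself). -/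
def StarPred (T : Set (Set ℕ)) (t : Set ℕ) : Set (Set ℕ) := {s ∈ T | AlmostSubset t s}

/-- `T` is a subtree of `([ω]^ω, ⊆*)`: all members are infinite, the largest element
`ω` belongs to `T`, distinct members of `T` are not almost equal (so `⊆*` is a genuine
partial order on `T`), and the predecessors of each node are well-ordered by reverse
`⊆*` (every nonempty subset of a predecessor set has a `⊆*`-greatest element). -/
def IsStarTree (T : Set (Set ℕ)) : Prop :=
  (∀ A ∈ T, A.Infinite) ∧ Set.univ ∈ T ∧
    (∀ s ∈ T, ∀ t ∈ T, AlmostSubset s t → AlmostSubset t s → s = t) ∧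
    ∀ t ∈ T, ∀ S ⊆ StarPred T t, S.Nonempty → ∃ m ∈ S, ∀ s ∈ S, AlmostSubset s m

/-- `T` end-extends `S` (as subtrees of `([ω]^ω, ⊆*)`). -/
def StarEndExt (S T : Set (Set ℕ)) : Prop :=
  S ⊆ T ∧ ∀ s ∈ S, StarPred T s = StarPred S s

/-- `T` is a maximal subtree of `([ω]^ω, ⊆*)`: for every infinite `C ⊆ ω` either some
`B ∈ T` satisfies `B ⊆* C`, or there are `⊆*`-incomparable `B, B' ∈ T` with
`C ⊆* B` and `C ⊆* B'`. -/
def IsMaxStarTree (T : Set (Set ℕ)) : Prop :=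
  IsStarTree T ∧ ∀ C : Set ℕ, C.Infinite →
    (∃ B ∈ T, AlmostSubset B C) ∨
      ∃ B ∈ T, ∃ B' ∈ T, StarIncomp B B' ∧ AlmostSubset C B ∧ AlmostSubset C B'

/-- `s` and `t` lie on the same level of `T`: their predecessor sets (which are
well-orders under `⊆*`) are order isomorphic, i.e. have the same order type. -/
def SameLevel (T : Set (Set ℕ)) (s t : Set ℕ) : Prop :=
  Nonempty ((fun a b : StarPred T s => AlmostSubset a.1 b.1) ≃r
    (fun a b : StarPred T t => AlmostSubset a.1 b.1))

/-- `T` has countable levels. -/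
def CountableLevels (T : Set (Set ℕ)) : Prop :=
  ∀ t ∈ T, {s ∈ T | SameLevel T s t}.Countable

/-- `A` is a branching node of `T`: there are `⊆*`-incomparable `B, C ∈ T` with
`pred_T(B) = pred_T(C)` such that `A` is the `⊆*`-smallest node of `pred_T(B)`. -/
def IsBranchingNode (T : Set (Set ℕ)) (A : Set ℕ) : Prop :=
  A ∈ T ∧ ∃ B ∈ T, ∃ C ∈ T, StarIncomp B C ∧ StarPred T B = StarPred T C ∧
    A ∈ StarPred T B ∧ ∀ s ∈ StarPred T B, AlmostSubset A s

section abs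
universe u
variable {P : Type u} [PartialOrder P] [WellFoundedLT P]

noncomputable def trk (a : P) : Ordinal.{u} := IsWellFounded.rank (α := P) (· < ·) a

theorem trk_lt {a b : P} (h : a < b) : trk a < trk b := IsWellFounded.rank_lt_of_rel h

theorem trk_le {a b : P} (h : a ≤ b) : trk a ≤ trk b := by
  rcases h.lt_or_eq with h | h
  · exact (trk_lt h).le
  · rw [h]

theorem exists_trk (t : P) : ∀ α ≤ trk t, ∃ a ≤ t, trk a = α := by
  induction t using WellFoundedLT.induction with
  | ind t ih =>
    intro α hα
    rcases hα.lt_or_eq with h | h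
    · have : ∃ b, b < t ∧ α ≤ trk b := by
        by_contra! hc
        apply absurd h
        rw [not_lt]
        unfold trk
        rw [IsWellFounded.rank_eq]
        apply Ordinal.iSup_le
        rintro ⟨b, hb⟩
        exact Order.succ_le_of_lt (hc b hb)
      obtain ⟨b, hb, hab⟩ := this
      obtain ⟨a, ha, h2⟩ := ih b hb α hab
      exact ⟨a, ha.trans hb.le, h2⟩
    · exact ⟨t, le_rfl, h.symm⟩

/-- countably split nodes -/
def Nice (A : P) : Prop := ∃ S : Set P, S.Countable ∧ (∀ E ∈ S, ¬ E ≤ A ∧ ¬ A ≤ E) ∧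
  ∀ b, b ≤ A ∨ A ≤ b ∨ ∃ E ∈ S, E ≤ b

def TreeOrd (P : Type u) [PartialOrder P] : Prop := ∀ a b c : P, a ≤ c → b ≤ c → a ≤ b ∨ b ≤ a

def KeyProp (P : Type u) [PartialOrder P] : Prop :=
  ∀ (B : ℕ → P) (S : Set P), Monotone B → S.Countable →
    (∀ n, ∀ E ∈ S, ¬ E ≤ B n) → (∀ b, (∃ n, b ≤ B n) ∨ ∃ E ∈ S, E ≤ b) →
    ∃ F F', ¬ F ≤ F' ∧ ¬ F' ≤ F ∧ ∀ n, B n ≤ F ∧ B n ≤ F'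

theorem le_of_trk (ht : TreeOrd P) {a b c : P} (ha : a ≤ c) (hb : b ≤ c) (h : trk a < trk b) :
    a ≤ b := by
  rcases ht a b c ha hb with h1 | h1
  · exact h1
  · exact absurd (trk_le h1) (not_le.2 h)

theorem eq_of_trk {a b : P} (hab : a ≤ b) (h : trk a = trk b) : a = b := by
  rcases hab.lt_or_eq with h1 | h1
  · exact absurd h (trk_lt h1).ne
  · exact h1

theorem eq_of_trk' (ht : TreeOrd P) {a b c : P} (ha : a ≤ c) (hb : b ≤ c) (h : trk a = trk b) :
    a = b := by
  rcases ht a b c ha hb with h1 | h1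
  · exact eq_of_trk h1 h
  · exact (eq_of_trk h1 h.symm).symm

theorem limit_step (ht : TreeOrd P) (hc : ∀ α : Ordinal.{u}, {t : P | trk t = α}.Countable)
    (hk : KeyProp P) (B : ℕ → P) (hB : Monotone B) (hN : ∀ n, Nice (B n)) (l : Ordinal.{u})
    (hl1 : ∀ n, trk (B n) < l) (hl2 : ∀ α < l, ∃ n, α ≤ trk (B n)) :
    (∃ F F', ¬ F ≤ F' ∧ ¬ F' ≤ F ∧ ∀ n, B n ≤ F ∧ B n ≤ F') ∧
    ∃ t, Nice t ∧ trk t = l ∧ ∀ n, B n ≤ t := by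
  choose S hS1 hS2 hS3 using hN
  have hmono : ∀ b : P, (∀ m, b ≠ B m) → (∀ m, B m ≤ b) → ∃ t ≤ b, trk t = l ∧ ∀ m, B m ≤ t := by
    intro b hne hb
    have hlb : l ≤ trk b := by
      by_contra! h
      obtain ⟨n, hn⟩ := hl2 _ h
      exact absurd (trk_lt ((hb n).lt_of_ne (hne n).symm)) (not_lt.2 hn)
    obtain ⟨t, h1, h2⟩ := exists_trk b l hlb
    exact ⟨t, h1, h2, fun m => le_of_trk ht (hb m) h1 (h2 ▸ hl1 m)⟩
  have hcov : ∀ b, (∃ n, b ≤ B n) ∨ (∃ n, ∃ E ∈ S n, E ≤ b) ∨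
      ∃ t ≤ b, trk t = l ∧ ∀ m, B m ≤ t := by
    intro b
    by_cases h1 : ∃ n, b ≤ B n
    · exact Or.inl h1
    by_cases h2 : ∃ n, ∃ E ∈ S n, E ≤ b
    · exact Or.inr (Or.inl h2)
    push Not at h1
    refine Or.inr (Or.inr (hmono b ?_ ?_))
    · rintro m rfl
      exact h1 m le_rfl
    · intro m
      rcases hS3 m b with h | h | h
      · exact absurd h (h1 m)
      · exact h
      · exact absurd ⟨m, h⟩ h2
  have key := hk B ((⋃ n, S n) ∪ {t | trk t = l}) hB
    ((Set.countable_iUnion hS1).union (hc l)) (by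
      rintro n E (hE | hE) hle
      · obtain ⟨m, hm⟩ := Set.mem_iUnion.1 hE
        rcases le_total n m with h | h
        · exact (hS2 m E hm).1 (hle.trans (hB h))
        · rcases ht E (B m) (B n) hle (hB h) with h | h
          · exact (hS2 m E hm).1 h
          · exact (hS2 m E hm).2 h
      · have := trk_le hle
        rw [show trk E = l from hE] at this
        exact absurd (hl1 n) (not_lt.2 this)) (by
      intro b
      rcases hcov b with h | ⟨n, E, h, h'⟩ | ⟨t, h1, h2, -⟩
      · exact Or.inl h
      · exact Or.inr ⟨E, Or.inl (Set.mem_iUnion.2 ⟨n, h⟩), h'⟩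
      · exact Or.inr ⟨t, Or.inr h2, h1⟩)
  refine ⟨key, ?_⟩
  obtain ⟨F, F', hF, hF', hBF⟩ := key
  obtain ⟨t, -, ht2, ht3⟩ := hmono F (by
    rintro m rfl
    exact hF (hBF m).2) (fun m => (hBF m).1)
  refine ⟨t, ⟨(⋃ n, S n) ∪ {s | trk s = l ∧ s ≠ t}, (Set.countable_iUnion hS1).union
    ((hc l).mono fun s hs => hs.1), ?_, ?_⟩, ht2, ht3⟩
  · rintro E (hE | ⟨hE, hEt⟩)
    · obtain ⟨m, hm⟩ := Set.mem_iUnion.1 hE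
      constructor
      · intro h
        rcases ht E (B m) t h (ht3 m) with h | h
        · exact (hS2 m E hm).1 h
        · exact (hS2 m E hm).2 h
      · intro h
        exact (hS2 m E hm).2 ((ht3 m).trans h)
    · exact ⟨fun h => hEt (eq_of_trk h (hE.trans ht2.symm)),
        fun h => hEt (eq_of_trk h (ht2.trans hE.symm)).symm⟩
  · intro b
    rcases hcov b with ⟨n, h⟩ | ⟨n, E, h, h'⟩ | ⟨t', h1, h2, -⟩
    · exact Or.inl (h.trans (ht3 n))
    · exact Or.inr (Or.inr ⟨E, Or.inl (Set.mem_iUnion.2 ⟨n, h⟩), h'⟩)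
    · by_cases htt : t' = t
      · exact Or.inr (Or.inl (htt ▸ h1))
      · exact Or.inr (Or.inr ⟨t', Or.inr ⟨h2, htt⟩, h1⟩)

/-- the first splitting level above a nice node -/
theorem split_level (ht : TreeOrd P) (hc : ∀ α : Ordinal.{u}, {t : P | trk t = α}.Countable)
    (hk : KeyProp P) (A : P) (hA : Nice A) :
    ∃ l, (∃ s t, A ≤ s ∧ A ≤ t ∧ s ≠ t ∧ trk s = l ∧ trk t = l) ∧
      ∀ D, A ≤ D → trk D ≤ l → Nice D := by
  have hex : ∃ l, ∃ s t, A ≤ s ∧ A ≤ t ∧ s ≠ t ∧ trk s = l ∧ trk t = l := by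
    obtain ⟨F, F', h1, h2, h3⟩ := (limit_step ht hc hk (fun _ => A) (fun _ _ _ => le_rfl)
      (fun _ => hA) (Order.succ (trk A)) (fun _ => Order.lt_succ _)
      (fun α h => ⟨0, Order.lt_succ_iff.1 h⟩)).1
    have hAF := (h3 0).1
    have hAF' := (h3 0).2
    have aux : ∀ F F' : P, A ≤ F → A ≤ F' → ¬ F ≤ F' → trk F ≤ trk F' →
        ∃ l, ∃ s t, A ≤ s ∧ A ≤ t ∧ s ≠ t ∧ trk s = l ∧ trk t = l := by
      intro F F' hF hF' hn hle
      obtain ⟨G, hG1, hG2⟩ := exists_trk F' _ hle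
      refine ⟨trk F, F, G, hF, ?_, ?_, rfl, hG2⟩
      · rcases (trk_le hF).lt_or_eq with h | h
        · exact le_of_trk ht hF' hG1 (hG2 ▸ h)
        · exact (eq_of_trk' ht hF' hG1 (h.trans hG2.symm)).le
      · rintro rfl
        exact hn hG1
    rcases le_total (trk F) (trk F') with h | h
    · exact aux F F' hAF hAF' h1 h
    · exact aux F' F hAF' hAF h2 h
  let l := sInf {l | ∃ s t, A ≤ s ∧ A ≤ t ∧ s ≠ t ∧ trk s = l ∧ trk t = l}
  have hl : l ∈ {l | ∃ s t, A ≤ s ∧ A ≤ t ∧ s ≠ t ∧ trk s = l ∧ trk t = l} := csInf_mem hex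
  have hmin : ∀ s t, A ≤ s → A ≤ t → trk s = trk t → trk s < l → s = t := by
    intro s t hs ht h hlt
    by_contra hne
    exact notMem_of_lt_csInf' hlt ⟨s, t, hs, ht, hne, rfl, h.symm⟩
  refine ⟨l, hl, ?_⟩
  intro D hAD hDl
  obtain ⟨S, hS1, hS2, hS3⟩ := hA
  refine ⟨S ∪ {E | trk E = trk D ∧ E ≠ D}, hS1.union ((hc (trk D)).mono fun s hs => hs.1), ?_, ?_⟩
  · rintro E (hE | ⟨hE, hEt⟩)
    · constructor
      · intro h
        rcases ht E A D h hAD with h | h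
        · exact (hS2 E hE).1 h
        · exact (hS2 E hE).2 h
      · intro h
        exact (hS2 E hE).2 (hAD.trans h)
    · exact ⟨fun h => hEt (eq_of_trk h hE), fun h => hEt (eq_of_trk h hE.symm).symm⟩
  · intro b
    rcases hS3 b with h | h | ⟨E, hE, h⟩
    · exact Or.inl (h.trans hAD)
    · rcases le_or_gt (trk D) (trk b) with h1 | h1
      · obtain ⟨G, hG1, hG2⟩ := exists_trk b _ h1
        by_cases hGD : G = D
        · exact Or.inr (Or.inl (hGD ▸ hG1))
        · exact Or.inr (Or.inr ⟨G, Or.inr ⟨hG2, hGD⟩, hG1⟩)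
      · obtain ⟨G, hG1, hG2⟩ := exists_trk D _ h1.le
        have hAG : A ≤ G := by
          rcases (trk_le h).lt_or_eq with h | h
          · exact le_of_trk ht hAD hG1 (hG2 ▸ h)
          · exact (eq_of_trk' ht hAD hG1 (h.trans hG2.symm)).le
        have := hmin G b hAG h hG2 (hG2 ▸ h1.trans_le hDl)
        exact Or.inl (this ▸ hG1)
    · exact Or.inr (Or.inr ⟨E, Or.inl hE, h⟩)

theorem extend_all (ht : TreeOrd P) (hc : ∀ α : Ordinal.{u}, {t : P | trk t = α}.Countable)
    (hk : KeyProp P) (l : Ordinal.{u}) :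
    ∀ A : P, Nice A → trk A ≤ l → ∃ D, Nice D ∧ A ≤ D ∧ trk D = l := by
  induction l using WellFoundedLT.induction with
  | ind l ih =>
  intro A hA hAl
  rcases hAl.lt_or_eq with hAl | hAl
  swap
  · exact ⟨A, hA, le_rfl, hAl⟩
  by_cases hseq : ∃ μ : ℕ → Ordinal.{u}, (∀ n, μ n < l) ∧ ∀ α < l, ∃ n, α ≤ μ n
  · obtain ⟨μ, hμ1, hμ2⟩ := hseq
    let Q := {B : P // Nice B ∧ A ≤ B ∧ trk B < l}
    have step : ∀ (n : ℕ) (B : Q), ∃ C : Q, B.1 ≤ C.1 ∧ μ n ≤ trk C.1 := by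
      rintro n ⟨B, hB1, hB2, hB3⟩
      obtain ⟨D, hD1, hD2, hD3⟩ := ih (max (trk B) (μ n)) (max_lt hB3 (hμ1 n)) B hB1
        (le_max_left _ _)
      exact ⟨⟨D, hD1, hB2.trans hD2, hD3.trans_lt (max_lt hB3 (hμ1 n))⟩, hD2,
        (le_max_right _ _).trans_eq hD3.symm⟩
    choose nx hnx1 hnx2 using step
    let B : ℕ → Q := fun n => Nat.rec ⟨A, hA, le_rfl, hAl⟩ (fun n B => nx n B) n
    obtain ⟨t, h1, h2, h3⟩ := (limit_step ht hc hk (fun n => (B n).1)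
      (monotone_nat_of_le_succ fun n => hnx1 n (B n)) (fun n => (B n).2.1) l
      (fun n => (B n).2.2.2) (fun α hα => by
        obtain ⟨n, hn⟩ := hμ2 α hα
        exact ⟨n + 1, hn.trans (hnx2 n (B n))⟩)).2
    exact ⟨t, h1, h3 0, h2⟩
  by_cases hsp : ∃ B, Nice B ∧ A ≤ B ∧ trk B < l ∧
      ∃ m, l ≤ m ∧ (∃ s, B ≤ s ∧ trk s = m) ∧ ∀ D, B ≤ D → trk D ≤ m → Nice D
  · obtain ⟨B, hB, hAB, hBl, m, hlm, ⟨s, hs, rfl⟩, hD⟩ := hsp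
    obtain ⟨D, hDs, hDl⟩ := exists_trk s l hlm
    have := le_of_trk ht hs hDs (hDl ▸ hBl)
    exact ⟨D, hD D this (hDl ▸ hlm), hAB.trans this, hDl⟩
  exfalso
  let Q := {B : P // Nice B ∧ A ≤ B ∧ trk B < l}
  have step : ∀ B : Q, ∃ C : Bool → Q, (∀ i, B.1 < (C i).1) ∧
      ∀ x, (C true).1 ≤ x → (C false).1 ≤ x → False := by
    rintro ⟨B, hB1, hB2, hB3⟩
    obtain ⟨m, ⟨s, t, h1, h2, hne, h3, h4⟩, h5⟩ := split_level ht hc hk B hB1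
    have hml : m < l := by
      by_contra! h
      exact hsp ⟨B, hB1, hB2, hB3, m, h, ⟨s, h1, h3⟩, h5⟩
    have hlt : ∀ s t, B ≤ s → B ≤ t → s ≠ t → trk s = m → trk t = m → B < s := by
      intro s t h1 h2 hne h3 h4
      refine h1.lt_of_ne ?_
      rintro rfl
      exact hne (eq_of_trk h2 (h3.trans h4.symm))
    refine ⟨fun i => if i then ⟨s, h5 s h1 h3.le, hB2.trans h1, h3 ▸ hml⟩ else
      ⟨t, h5 t h2 h4.le, hB2.trans h2, h4 ▸ hml⟩, ?_, ?_⟩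
    · rintro (_ | _)
      · exact hlt t s h2 h1 hne.symm h4 h3
      · exact hlt s t h1 h2 hne h3 h4
    · intro x hs ht'
      exact hne (eq_of_trk' ht hs ht' (h3.trans h4.symm))
  choose C hC1 hC2 using step
  let A0 : Q := ⟨A, hA, le_rfl, hAl⟩
  let G : List Bool → Q := fun s => s.foldr (fun i B => C B i) A0
  obtain ⟨e, he⟩ := exists_surjective_nat (List Bool)
  have hbd : ∃ α < l, ∀ s, trk (G s).1 < α := by
    by_contra! h
    refine hseq ⟨fun n => trk (G (e n)).1, fun n => (G (e n)).2.2.2, fun α hα => ?_⟩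
    obtain ⟨s, hs⟩ := h α hα
    obtain ⟨n, rfl⟩ := he s
    exact ⟨n, hs⟩
  obtain ⟨α, hαl, hα⟩ := hbd
  -- branches
  let br : (ℕ → Bool) → ℕ → Q := fun f n => Nat.rec A0 (fun n B => C B (f n)) n
  have hbr : ∀ f n, ∃ s, br f n = G s := by
    intro f n
    induction n with
    | zero => exact ⟨[], rfl⟩
    | succ n ih =>
      obtain ⟨s, hs⟩ := ih
      refine ⟨f n :: s, ?_⟩
      change C (br f n) (f n) = C (G s) (f n)
      rw [hs]
  have hmono : ∀ f, StrictMono fun n => (br f n).1 := fun f =>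
    strictMono_nat_of_lt_succ fun n => hC1 (br f n) (f n)
  have hD : ∀ f : ℕ → Bool, ∃ D : P, trk D = α ∧ ∀ n, (br f n).1 ≤ D := by
    intro f
    have hbdd : BddAbove (Set.range fun n => trk (br f n).1) :=
      ⟨α, by
        rintro _ ⟨n, rfl⟩
        obtain ⟨s, hs⟩ := hbr f n
        exact (hs ▸ hα s).le⟩
    obtain ⟨t, h1, h2, h3⟩ := (limit_step ht hc hk (fun n => (br f n).1) (hmono f).monotone
      (fun n => (br f n).2.1) (⨆ n, trk (br f n).1)
      (fun n => (trk_lt (hmono f n.lt_succ_self)).trans_le (le_ciSup hbdd (n + 1)))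
      (fun β hβ => by
        obtain ⟨n, hn⟩ := exists_lt_of_lt_ciSup hβ
        exact ⟨n, hn.le⟩)).2
    obtain ⟨D, -, hD2, hD3⟩ := ih α hαl t h1 (by
      rw [h2]
      refine ciSup_le fun n => ?_
      obtain ⟨s, hs⟩ := hbr f n
      exact (hs ▸ hα s).le)
    exact ⟨D, hD3, fun n => (h3 n).trans hD2⟩
  choose D hD1 hD2 using hD
  have hinj : Function.Injective D := by
    intro f g hfg
    by_contra hne
    have hex : ∃ n, f n ≠ g n := by
      by_contra! h
      exact hne (funext h)
    classical
    have hn := Nat.find_spec hex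
    have hm : ∀ m < Nat.find hex, f m = g m := fun m hm => not_not.1 (Nat.find_min hex hm)
    set n := Nat.find hex
    have heq : ∀ k ≤ n, br f k = br g k := by
      intro k
      induction k with
      | zero => intro _; rfl
      | succ k ihk =>
        intro hk
        change C (br f k) (f k) = C (br g k) (g k)
        rw [ihk (by omega), hm k (by omega)]
    have h1 : (C (br f n) (f n)).1 ≤ D f := hD2 f (n + 1)
    have h2 : (C (br g n) (g n)).1 ≤ D g := hD2 g (n + 1)
    rw [← heq n le_rfl, ← hfg] at h2
    cases hf : f n <;> cases hg : g n <;> simp only [hf, hg] at h1 h2 hn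
    · exact hn rfl
    · exact hC2 _ _ h2 h1
    · exact hC2 _ _ h1 h2
    · exact hn rfl
  have hcount : (Set.univ : Set (ℕ → Bool)).Countable := by
    refine Set.MapsTo.countable_of_injOn (f := D) (t := {t | trk t = α}) ?_ hinj.injOn (hc α)
    exact fun f _ => hD1 f
  have := Set.countable_univ_iff.1 hcount
  have h1 : Cardinal.mk (ℕ → Bool) ≤ Cardinal.aleph0 := Cardinal.mk_le_aleph0
  have h2 := Cardinal.cantor Cardinal.aleph0
  rw [← Cardinal.power_def, Cardinal.mk_bool, Cardinal.mk_nat] at h1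
  exact absurd h1 (not_le.2 h2)

theorem abs_main [OrderBot P] (ht : TreeOrd P)
    (hc : ∀ α : Ordinal.{u}, {t : P | trk t = α}.Countable) (hk : KeyProp P) : False := by
  have hbot : Nice (⊥ : P) := ⟨∅, Set.countable_empty, by simp, fun b => Or.inr (Or.inl bot_le)⟩
  have hb : BddAbove (Set.range (trk : P → Ordinal.{u})) := Ordinal.bddAbove_of_small
  obtain ⟨l, hl⟩ := hb
  obtain ⟨D, -, -, hD⟩ := extend_all ht hc hk (Order.succ l) ⊥ hbot
    ((hl ⟨_, rfl⟩).trans (Order.le_succ l))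
  have := hl ⟨D, rfl⟩
  rw [hD] at this
  exact absurd (Order.lt_succ l) (not_lt.2 this)
end abs

theorem as_refl (A : Set ℕ) : AlmostSubset A A := by simp [AlmostSubset]

theorem as_trans {A B C : Set ℕ} (h : AlmostSubset A B) (h' : AlmostSubset B C) :
    AlmostSubset A C := by
  refine (h.union h').subset ?_
  intro x hx
  by_cases hb : x ∈ B
  · exact Or.inr ⟨hb, hx.2⟩
  · exact Or.inl ⟨hx.1, hb⟩

theorem inter_inf (B : ℕ → Set ℕ) (hB : ∀ m n, m ≤ n → AlmostSubset (B n) (B m)) (E : Set ℕ)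
    (j : ℕ) (hE : ¬ AlmostSubset (B j) E) : {x | (∀ i ≤ j, x ∈ B i) ∧ x ∉ E}.Infinite := by
  intro hfin
  apply hE
  have h2 : (⋃ i ∈ Set.Iic j, (B j \ B i)).Finite :=
    (Set.finite_Iic j).biUnion fun i hi => hB i j hi
  refine (hfin.union h2).subset ?_
  intro x hx
  by_cases h : ∀ i ≤ j, x ∈ B i
  · exact Or.inl ⟨h, hx.2⟩
  · push Not at h
    obtain ⟨i, hi, hxi⟩ := h
    exact Or.inr (Set.mem_biUnion (show i ∈ Set.Iic j from hi) ⟨hx.1, hxi⟩)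

theorem pseudo (B : ℕ → Set ℕ) (hB : ∀ m n, m ≤ n → AlmostSubset (B n) (B m))
    (E : ℕ → Set ℕ) (hE : ∀ n k, ¬ AlmostSubset (B n) (E k)) :
    ∃ X : Bool → Set ℕ, (∀ i, (X i).Infinite) ∧ Disjoint (X true) (X false) ∧
      (∀ i n, AlmostSubset (X i) (B n)) ∧ ∀ i k, ¬ AlmostSubset (X i) (E k) := by
  let u : ℕ → ℕ := fun j => (Nat.unpair (j / 2)).1
  have hst : ∀ j p : ℕ, ∃ x, p < x ∧ (∀ i ≤ j, x ∈ B i) ∧ x ∉ E (u j) := by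
    intro j p
    obtain ⟨x, hx, hp⟩ := (inter_inf B hB (E (u j)) j (hE j _)).exists_gt p
    exact ⟨x, hp, hx⟩
  choose nx h1 h2 h3 using hst
  let x : ℕ → ℕ := fun n => Nat.rec (nx 0 0) (fun n p => nx (n + 1) p) n
  have hx : StrictMono x := strictMono_nat_of_lt_succ fun n => h1 (n + 1) (x n)
  have hxB : ∀ j, ∀ i ≤ j, x j ∈ B i := by
    rintro (_ | j)
    · exact h2 0 0
    · exact h2 (j + 1) (x j)
  have hxE : ∀ j, x j ∉ E (u j) := by
    rintro (_ | j)
    · exact h3 0 0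
    · exact h3 (j + 1) (x j)
  let c : Bool → ℕ → ℕ := fun i j => 2 * j + (if i then 1 else 0)
  have hc : ∀ i, Function.Injective (c i) := by
    intro i a b h
    simp only [c] at h
    omega
  have hcu : ∀ i k n, u (c i (Nat.pair k n)) = k := by
    intro i k n
    have : (2 * (Nat.pair k n) + (if i then 1 else 0)) / 2 = Nat.pair k n := by
      split_ifs <;> omega
    simp only [u, c, this, Nat.unpair_pair]
  refine ⟨fun i => Set.range fun j => x (c i j), ?_, ?_, ?_, ?_⟩
  · intro i
    exact Set.infinite_range_of_injective (hx.injective.comp (hc i))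
  · rw [Set.disjoint_left]
    rintro _ ⟨a, rfl⟩ ⟨b, hb⟩
    have : c false b = c true a := hx.injective hb
    simp [c] at this
    omega
  · intro i n
    refine ((Set.finite_Iio n).image x).subset ?_
    rintro _ ⟨⟨j, rfl⟩, hj⟩
    refine ⟨c i j, ?_, rfl⟩
    by_contra h
    exact hj (hxB _ _ (not_lt.1 h))
  · intro i k hfin
    refine absurd hfin (Set.Infinite.mono (s := Set.range fun n => x (c i (Nat.pair k n))) ?_ ?_)
    · rintro _ ⟨n, rfl⟩
      refine ⟨⟨_, rfl⟩, ?_⟩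
      have := hxE (c i (Nat.pair k n))
      rwa [hcu] at this
    · apply Set.infinite_range_of_injective
      intro a b hab
      have := hc i (hx.injective hab)
      exact (Nat.pair_eq_pair.1 this).2

/-- nodes of the tree, as a type of its own -/
@[ext] structure Node (T : Set (Set ℕ)) where
  val : Set ℕ
  property : val ∈ T

/-- the tree order (reverse almost inclusion) -/
@[reducible] def treePO (T : Set (Set ℕ)) (hT : IsStarTree T) : PartialOrder (Node T) where
  le s t := AlmostSubset t.1 s.1
  le_refl s := as_refl _
  le_trans _ _ _ h h' := as_trans h' h
  le_antisymm s t h h' := Node.ext (hT.2.2.1 _ s.2 _ t.2 h' h)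

theorem no_max (T : Set (Set ℕ)) (hT : IsStarTree T) (hlev : CountableLevels T) :
    ¬ IsMaxStarTree T := by
  intro hmax
  let _ := treePO T hT
  have hle : ∀ s t : Node T, s ≤ t ↔ AlmostSubset t.1 s.1 := fun _ _ => Iff.rfl
  haveI hwf : WellFoundedLT (Node T) := by
    refine ⟨WellFounded.wellFounded_iff_has_min.2 ?_⟩
    rintro S ⟨t, ht⟩
    obtain ⟨m, ⟨⟨m', hm', rfl⟩, hmt⟩, hmin⟩ := hT.2.2.2 t.1 t.2
      {x | (∃ y ∈ S, y.1 = x) ∧ AlmostSubset t.1 x}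
      (by rintro x ⟨⟨y, _, rfl⟩, h⟩; exact ⟨y.2, h⟩) ⟨t.1, ⟨t, ht, rfl⟩, as_refl _⟩
    refine ⟨m', hm', fun x hx hlt => ?_⟩
    exact hlt.not_ge (hmin x.1 ⟨⟨x, hx, rfl⟩, as_trans hmt hlt.le⟩)
  letI : OrderBot (Node T) := { bot := ⟨Set.univ, hT.2.1⟩, bot_le := fun a => by simp [hle, AlmostSubset] }
  have htree : TreeOrd (Node T) := by
    intro a b c ha hb
    obtain ⟨m, hm, hmin⟩ := hT.2.2.2 c.1 c.2 {a.1, b.1} (by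
      rintro x (rfl | rfl)
      · exact ⟨a.2, ha⟩
      · exact ⟨b.2, hb⟩) ⟨a.1, Or.inl rfl⟩
    rcases hm with rfl | rfl
    · exact Or.inl (hmin b.1 (Or.inr rfl))
    · exact Or.inr (hmin a.1 (Or.inl rfl))
  have hsame : ∀ s t : Node T, trk s = trk t → SameLevel T s.1 t.1 := by
    intro s t hst
    have hex : ∀ a : StarPred T s.1, ∃ b : StarPred T t.1,
        trk (⟨b.1, b.2.1⟩ : Node T) = trk (⟨a.1, a.2.1⟩ : Node T) := by
      intro a
      have h1 : (⟨a.1, a.2.1⟩ : Node T) ≤ s := a.2.2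
      obtain ⟨b, hb, hb'⟩ := exists_trk t _ ((trk_le h1).trans_eq hst)
      exact ⟨⟨b.1, b.2, hb⟩, hb'⟩
    choose f hf using hex
    have hord : ∀ (s : Node T) (a b : StarPred T s.1), AlmostSubset a.1 b.1 ↔
        trk (⟨b.1, b.2.1⟩ : Node T) ≤ trk (⟨a.1, a.2.1⟩ : Node T) := by
      intro s a b
      constructor
      · intro h
        exact trk_le (show (⟨b.1, b.2.1⟩ : Node T) ≤ ⟨a.1, a.2.1⟩ from h)
      · intro h
        have ha : (⟨a.1, a.2.1⟩ : Node T) ≤ s := a.2.2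
        have hb : (⟨b.1, b.2.1⟩ : Node T) ≤ s := b.2.2
        rcases h.lt_or_eq with h | h
        · exact le_of_trk htree hb ha h
        · exact (eq_of_trk' htree hb ha h).le
    have hinj : Function.Injective f := by
      intro a b hab
      have h : trk (⟨a.1, a.2.1⟩ : Node T) = trk (⟨b.1, b.2.1⟩ : Node T) := by
        rw [← hf a, ← hf b, hab]
      have := eq_of_trk' htree (show (⟨a.1, a.2.1⟩ : Node T) ≤ s from a.2.2)
        (show (⟨b.1, b.2.1⟩ : Node T) ≤ s from b.2.2) h
      exact Subtype.ext (congrArg Node.val this)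
    have hsurj : Function.Surjective f := by
      intro b
      have h1 : (⟨b.1, b.2.1⟩ : Node T) ≤ t := b.2.2
      obtain ⟨a, ha, ha'⟩ := exists_trk s _ ((trk_le h1).trans_eq hst.symm)
      refine ⟨⟨a.1, a.2, ha⟩, ?_⟩
      have h2 := hf ⟨a.1, a.2, ha⟩
      have := eq_of_trk' htree
        (show (⟨(f ⟨a.1, a.2, ha⟩).1, (f ⟨a.1, a.2, ha⟩).2.1⟩ : Node T) ≤ t from
          (f ⟨a.1, a.2, ha⟩).2.2) h1 (h2.trans ha')
      exact Subtype.ext (congrArg Node.val this)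
    refine ⟨⟨Equiv.ofBijective f ⟨hinj, hsurj⟩, ?_⟩⟩
    intro a b
    change AlmostSubset (f a).1 (f b).1 ↔ AlmostSubset a.1 b.1
    rw [hord t, hord s, hf, hf]
  refine abs_main htree ?_ ?_
  · intro α
    by_cases h : ∃ t : Node T, trk t = α
    · obtain ⟨t, rfl⟩ := h
      refine Set.MapsTo.countable_of_injOn (f := Node.val) ?_
        (fun a _ b _ h => Node.ext h) (hlev t.1 t.2)
      exact fun s hs => ⟨s.2, hsame s t hs⟩
    · convert Set.countable_empty
      ext t
      simp only [Set.mem_setOf_eq, Set.mem_empty_iff_false, iff_false]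
      exact fun h' => h ⟨t, h'⟩
  · intro B S hB hS hBS hcov
    have hS' : (insert ∅ (Node.val '' S) : Set (Set ℕ)).Countable :=
      (hS.image _).insert _
    obtain ⟨E, hE⟩ := hS'.exists_eq_range ⟨∅, Or.inl rfl⟩
    obtain ⟨X, hX1, hX2, hX3, hX4⟩ := pseudo (fun n => (B n).1) (fun m n h => hB h) E (by
      intro n k
      have : E k ∈ insert ∅ (Node.val '' S) := hE ▸ ⟨k, rfl⟩
      rcases this with h | ⟨e, he, h⟩
      · rw [h]
        intro h'
        exact hT.1 _ (B n).2 (by simpa [AlmostSubset] using h')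
      · rw [← h]
        exact hBS n e he)
    have hup : ∀ i, ∀ b : Node T, AlmostSubset (X i) b.1 → ∃ n, b ≤ B n := by
      intro i b hb
      rcases hcov b with h | ⟨e, he, h⟩
      · exact h
      · exfalso
        have : e.1 ∈ Set.range E := hE ▸ Or.inr ⟨e, he, rfl⟩
        obtain ⟨k, hk⟩ := this
        exact hX4 i k (hk ▸ as_trans hb h)
    have hF : ∀ i, ∃ F : Node T, AlmostSubset F.1 (X i) := by
      intro i
      rcases hmax.2 (X i) (hX1 i) with ⟨F, hF, h⟩ | ⟨b, hb, b', hb', hinc, h, h'⟩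
      · exact ⟨⟨F, hF⟩, h⟩
      · exfalso
        obtain ⟨n, hn⟩ := hup i ⟨b, hb⟩ h
        obtain ⟨m, hm⟩ := hup i ⟨b', hb'⟩ h'
        rcases htree _ _ (B (max n m)) (hn.trans (hB (le_max_left n m)))
          (hm.trans (hB (le_max_right n m))) with h | h
        · exact hinc.2 h
        · exact hinc.1 h
    choose F hF using hF
    have hno : ∀ D : Node T, AlmostSubset D.1 (X true) → AlmostSubset D.1 (X false) → False := by
      intro D h h'
      refine hT.1 _ D.2 ((h.union h').subset ?_)
      intro x hx
      by_cases hxt : x ∈ X true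
      · exact Or.inr ⟨hx, Set.disjoint_left.1 hX2 hxt⟩
      · exact Or.inl ⟨hx, hxt⟩
    refine ⟨F true, F false, ?_, ?_, ?_⟩
    · intro h
      exact hno (F false) (as_trans h (hF true)) (hF false)
    · intro h
      exact hno (F true) (hF true) (as_trans h (hF false))
    · intro n
      exact ⟨as_trans (hF true) (hX3 true n), as_trans (hF false) (hX3 false n)⟩

/-- If `T` is a subtree of `([ω]^ω, ⊆*)` with countable levels and
`b = {A_α : α < γ}` is a maximal branch of `T` with `cf(γ) > ω` such that only
countably many nodes of `b` are branching nodes of `T`, then `T` is not maximal. -/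
theorem not_max_of_few_branching (T : Set (Set ℕ)) (hT : IsStarTree T)
    (hlev : CountableLevels T)
    (γ : Ordinal) (hcf : Cardinal.aleph0 < γ.cof)
    (A : Ordinal → Set ℕ) (hmem : ∀ α < γ, A α ∈ T)
    (hdec : ∀ α β : Ordinal, α < β → β < γ →
      AlmostSubset (A β) (A α) ∧ ¬ AlmostSubset (A α) (A β))
    (b : Set (Set ℕ)) (hb : b = {x | ∃ α < γ, x = A α})
    (hchain : IsChain (fun x y => AlmostSubset x y) b)
    (hmaxbr : ∀ b', b ⊆ b' → b' ⊆ T →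
      IsChain (fun x y => AlmostSubset x y) b' → b' = b)
    (hbr : {x ∈ b | IsBranchingNode T x}.Countable) :
    ¬ IsMaxStarTree T := by
  exact no_max T hT hlev
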